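/- For every natural number k there exists a finite connected graph G with cop number cn(G) > k such that G is isomorphic to the intersection graph of a finite family of axis-aligned unit cubes in ℝ³ (translates of [0,1]³). Hence the maximum cop number of intersection graphs of 3-dimensional unit cubes is unbounded. -/

import Mathlib

/-!
Take the incidence graph of points and non-vertical lines of the affine plane over `ZMod q`: it is
`q`-regular and has no 4-cycle (`Inc.degree`, `Inc.c4_free`), which is what lets a robber evade
about `q / 2` cops. A unit cube cannot have many pairwise disjoint neighbours, so every vertex is
stretched to a segment: points become rows parallel to the `x`-axis at height `0`, lines become
columns parallel to the `y`-axis at a large height `H`, and each incidence becomes a vertical shaft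
where its row and its column cross (`Crossbar`). The graph consists of the unit cubes based at these
lattice points; rows, columns and shafts are two units apart, so cubes meet only where they should.

All shafts have the same length `H`, while a row or column has length `D`, with `H = 2 * D + 5`. A
robber who has entered the row of a point runs along it and up another shaft to the column of a
line, and so on forever. Suppose each cop is either behind the robber in the shaft just used, at
least two steps back, or at distance at least `D + 3` from the row (`Clear`). Each cop
makes at most two next lines unattractive, because there are no 4-cycles; so if `q ≥ 2 k + 2`, some
other line is good (`exists_harmless_line`). During the run to it, one move of a cop reduces
its distance to the goal by at most one, and one move of the robber reduces his by exactly one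
(`Harmless.step`, `Runner.step`). On arrival, the cops that came along through the robber's row are
at least two steps behind him, and all the others are still far from the column, so the situation
repeats with points and lines exchanged (`Harmless.clear_flip`); this exchange is the
symmetry `(x, y, z) ↦ (y, x, H - z)` of the crossbar.
-/

/-!  The game of cops and robber on a graph.

The cops first choose starting vertices, then the robber chooses a starting vertex;
the players then alternate turns, the cops moving first; each piece either stays or
moves to an adjacent vertex.  A cop strategy chooses, at each cop turn, the new cop
positions as a function of the full history of robber positions (which, together with
the strategy itself, determines the full history of the play).  The robber, having
full information, is modelled as an arbitrary legal trajectory.  -/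

/-- The sequence of cop positions determined by the initial placement `init`, the cop
strategy `F` (a function of the history of robber positions), and the robber trajectory
`rob`; `copSeq init F rob n` is the position of the cops before the robber's `n`-th move,
i.e. the cops' `(n+1)`-st positions respond to the robber positions `rob 0, …, rob n`. -/
def copSeq {V : Type*} {k : ℕ} (init : Fin k → V) (F : List V → Fin k → V)
    (rob : ℕ → V) : ℕ → Fin k → V
  | 0 => init
  | n + 1 => F ((List.range (n + 1)).map rob)

/-- A robber trajectory is legal if at each turn the robber stays or moves along an edge. -/
def RobberLegal {V : Type*} (G : SimpleGraph V) (rob : ℕ → V) : Prop :=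
  ∀ n, rob (n + 1) = rob n ∨ G.Adj (rob n) (rob (n + 1))

/-- A sequence of cop positions is legal if at each turn every cop stays or moves along an edge. -/
def CopsLegal {V : Type*} {k : ℕ} (G : SimpleGraph V) (c : ℕ → Fin k → V) : Prop :=
  ∀ n i, c (n + 1) i = c n i ∨ G.Adj (c n i) (c (n + 1) i)

/-- `k` cops have a winning strategy on `G`: there are initial positions and a legal
strategy capturing every legal robber trajectory in finitely many turns (a cop occupies
the robber's vertex, either after the cops' move or after the robber's move). -/
def CopWin {V : Type*} (G : SimpleGraph V) (k : ℕ) : Prop :=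
  ∃ (init : Fin k → V) (F : List V → Fin k → V),
    ∀ rob : ℕ → V, RobberLegal G rob →
      CopsLegal G (copSeq init F rob) ∧
      ∃ n i, copSeq init F rob n i = rob n ∨ copSeq init F rob (n + 1) i = rob n

/-- The cop number of `G`: the least `k` such that `k` cops have a winning strategy. -/
noncomputable def copNumber {V : Type*} (G : SimpleGraph V) : ℕ :=
  sInf { k | CopWin G k }

/-- An axis-aligned unit cube in `ℝ³`: a translate `p + [0,1]³`. -/
def IsUnitCube (s : Set (EuclideanSpace ℝ (Fin 3))) : Prop :=
  ∃ p : EuclideanSpace ℝ (Fin 3), s = {q | ∀ i, p i ≤ q i ∧ q i ≤ p i + 1}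

/-! ### Evading strategies -/

/-- The robber evades `k` cops if there is a relation `Safe` between positions of the cops and of
the robber, the cops being about to move, that he can establish initially and then maintain, and
that excludes capture. -/
theorem not_copWin_of_safe {V : Type*} (G : SimpleGraph V) (k : ℕ)
    (Safe : (Fin k → V) → V → Prop)
    (hinit : ∀ c, ∃ r, Safe c r)
    (hsafe : ∀ c r, Safe c r → ∀ m, c m ≠ r)
    (hstep : ∀ c r c', Safe c r → (∀ m, c' m = c m ∨ G.Adj (c m) (c' m)) →
      (∀ m, c' m ≠ r) ∧ ∃ r', (r' = r ∨ G.Adj r r') ∧ Safe c' r') :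
    ¬ CopWin G k := by
  classical
  rintro ⟨init, F, hF⟩
  obtain ⟨r₀, hr₀⟩ := hinit init
  let g : (Fin k → V) → V → V := fun c r =>
    if h : ∃ r', (r' = r ∨ G.Adj r r') ∧ Safe c r' then h.choose else r
  have hg : ∀ c r, g c r = r ∨ G.Adj r (g c r) := by
    intro c r
    by_cases h : ∃ r', (r' = r ∨ G.Adj r r') ∧ Safe c r'
    · simpa only [g, dif_pos h] using h.choose_spec.1
    · simp only [g, dif_neg h, true_or]
  have hg' : ∀ c r, (∃ r', (r' = r ∨ G.Adj r r') ∧ Safe c r') → Safe c (g c r) := by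
    intro c r h
    simpa only [g, dif_pos h] using h.choose_spec.2
  -- The robber's strategy needs the history, so the history is carried along in the recursion.
  let st : ℕ → List V × V := fun n => Nat.rec ([r₀], r₀)
    (fun _ s => (s.1 ++ [g (F s.1) s.2], g (F s.1) s.2)) n
  have st_succ : ∀ n, st (n + 1) =
      ((st n).1 ++ [g (F (st n).1) (st n).2], g (F (st n).1) (st n).2) := fun _ => rfl
  let rob : ℕ → V := fun n => (st n).2
  have hist : ∀ n, (st n).1 = (List.range (n + 1)).map rob := by
    intro n
    induction n with
    | zero => rfl
    | succ n ih =>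
      rw [List.range_succ, List.map_append, ← ih, st_succ]
      rfl
  have hrob : ∀ n, rob (n + 1) = g (copSeq init F rob (n + 1)) (rob n) := by
    intro n
    change (st (n + 1)).2 = g (F ((List.range (n + 1)).map rob)) (st n).2
    rw [st_succ, hist]
  have hlegal : RobberLegal G rob := fun n => by
    rw [hrob]; exact hg _ _
  obtain ⟨hcl, n, m, hcap⟩ := hF rob hlegal
  have hs : ∀ n, Safe (copSeq init F rob n) (rob n) := by
    intro n
    induction n with
    | zero => exact hr₀
    | succ n ih =>
      rw [hrob]
      exact hg' _ _ (hstep _ _ _ ih (hcl n)).2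
  rcases hcap with hcap | hcap
  · exact hsafe _ _ (hs n) m hcap
  · exact (hstep _ _ _ (hs n) (hcl n)).1 m hcap

theorem copWin_card {n : ℕ} (G : SimpleGraph (Fin n)) : CopWin G n :=
  ⟨id, fun _ => id, fun rob _ => ⟨fun m i => Or.inl (by cases m <;> rfl), 0, rob 0, Or.inl rfl⟩⟩

/-! ### The crossbar and its pursuit potentials -/

/-- The crossbar of a relation `I` between points and lines, as a set of lattice points `(x, y, z)`
in the box `[0, D]² × [0, H]`: the row of the point `i` is `y = 2 i`, `z = 0`; the column of the
line `j` is `x = 2 j`, `z = H`; and each `I i j` contributes the vertical shaft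
`x = 2 j`, `y = 2 i` joining the two. -/
def Crossbar (I : ℤ → ℤ → Prop) (D H x y z : ℤ) : Prop :=
  (0 ≤ x ∧ x ≤ D) ∧ (0 ≤ y ∧ y ≤ D) ∧ (0 ≤ z ∧ z ≤ H) ∧
    ((z = 0 ∧ y % 2 = 0) ∨ (z = H ∧ x % 2 = 0) ∨ ∃ i j, y = 2 * i ∧ x = 2 * j ∧ I i j)

/-- The lattice points are equal or neighbours in the sup norm, i.e. the unit cubes based at them
meet. -/
def Near (x y z x' y' z' : ℤ) : Prop :=
  (x - x' ≤ 1 ∧ x' - x ≤ 1) ∧ (y - y' ≤ 1 ∧ y' - y ≤ 1) ∧ (z - z' ≤ 1 ∧ z' - z ≤ 1)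

/-- The robber runs from the row of `i` up the shaft of `(i, j)` and is `s` steps short of its last
cell, `(2 j, 2 i, H - 1)`. Where shaft and row meet he cuts the corner by a diagonal step between
height `1` in the shaft and its neighbour in the row, which explains the constant `H - 2`. -/
def Runner (H i j s x y z : ℤ) : Prop :=
  y = 2 * i ∧ ((x = 2 * j ∧ z = H - 1 - s) ∨ (x ≠ 2 * j ∧ z ≤ 1 ∧ H - 2 + |x - 2 * j| = s))

/-- A cop at `(x, y, z)` is harmless for a robber `s` steps short of the end of the shaft of
`(i, j)`. In the star of `i` (its row and its shafts) it must be at least `s + 2` steps short of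
that end; outside, it must be at least `s + D + 3` steps away from the column of `j`, where routes
through the star of `i` do not count and distances are truncated at `2 * H`. The term
`max z 1` is the corner cut at the foot of a shaft. -/
def Harmless (I : ℤ → ℤ → Prop) (D H i j s x y z : ℤ) : Prop :=
  (y = 2 * i ∧ z < H ∧ (x = 2 * j → s + 2 ≤ H - 1 - z) ∧
      (x ≠ 2 * j → s + 2 ≤ H - 3 + max z 1 + |x - 2 * j|)) ∨
  (¬ (y = 2 * i ∧ z < H) ∧ ¬ (z = H ∧ x = 2 * j) ∧
    ∀ i', y = 2 * i' → I i' j → i' ≠ i →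
      (x = 2 * j → s + (D + 3) ≤ H - z) ∧ (x ≠ 2 * j → s + (D + 3) ≤ H + z))

theorem Harmless.step {I : ℤ → ℤ → Prop} {D H i j s x y z x' y' z' : ℤ}
    (hD : 0 ≤ D) (hH : H = 2 * D + 5) (hs : 1 ≤ s) (hs' : s ≤ H - 2 + D)
    (hW : Crossbar I D H x y z) (hW' : Crossbar I D H x' y' z') (hN : Near x y z x' y' z')
    (h : Harmless I D H i j s x y z) : Harmless I D H i j (s - 1) x' y' z' := by
  obtain ⟨⟨hx0, hx1⟩, ⟨hy0, hy1⟩, ⟨hz0, hz1⟩, hW⟩ := hW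
  obtain ⟨⟨hx0', hx1'⟩, ⟨hy0', hy1'⟩, ⟨hz0', hz1'⟩, hW'⟩ := hW'
  obtain ⟨⟨a1, a2⟩, ⟨a3, a4⟩, a5, a6⟩ := hN
  have pW : (z = 0 ∧ y % 2 = 0) ∨ (z = H ∧ x % 2 = 0) ∨ (y % 2 = 0 ∧ x % 2 = 0) := by
    rcases hW with h | h | ⟨a, b, rfl, rfl, -⟩ <;> omega
  have pW' : (z' = 0 ∧ y' % 2 = 0) ∨ (z' = H ∧ x' % 2 = 0) ∨ (y' % 2 = 0 ∧ x' % 2 = 0) := by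
    rcases hW' with h | h | ⟨a, b, rfl, rfl, -⟩ <;> omega
  by_cases hst' : y' = 2 * i ∧ z' < H
  · left
    refine ⟨hst'.1, hst'.2, ?_⟩
    rcases h with ⟨h1, h2, h3, h4⟩ | ⟨h1, h2, -⟩
    · by_cases hx : x = 2 * j
      · have := h3 hx
        simp only [abs_eq_max_neg] at this ⊢
        constructor <;> intro hx' <;> omega
      · have := h4 hx
        simp only [abs_eq_max_neg] at this ⊢
        constructor <;> intro hx' <;> omega
    · have hz : z = H := by omega
      simp only [abs_eq_max_neg]
      constructor <;> intro hx' <;> omega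
  · right
    refine ⟨hst', ?_⟩
    rcases h with ⟨h1, h2, h3, h4⟩ | ⟨h1, h2, h3⟩
    · have hx : x ≠ 2 * j := fun hx => by have := h3 hx; omega
      refine ⟨by omega, fun i' _ _ _ => ⟨by omega, by omega⟩⟩
    · constructor
      · rintro ⟨hz', hx'⟩
        rcases hW with h | h | ⟨a, b, ha, hb, hab⟩
        · omega
        · omega
        · obtain rfl : b = j := by omega
          have := (h3 a ha hab (by rintro rfl; omega)).1 hb
          omega
      · intro i' hy' hI hi'
        by_cases hy : y = 2 * i'
        · obtain ⟨h4, h5⟩ := h3 i' hy hI hi'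
          constructor <;> intro hx' <;> by_cases hx : x = 2 * j
          · have := h4 hx; omega
          · have := h5 hx; omega
          · have := h4 hx; omega
          · have := h5 hx; omega
        · constructor <;> intro hx' <;> omega

/-- A harmless cop is not on the robber's vertex, not even after a move of its own, when the cop
counts one step fewer than the robber. -/
theorem Harmless.ne_runner {I : ℤ → ℤ → Prop} {D H i j s s' x y z : ℤ} (hs' : s ≤ s' + 1)
    (hs : 0 ≤ s) (h : Harmless I D H i j s' x y z) (hr : Runner H i j s x y z) (hH : 4 ≤ H) :
    False := by
  obtain ⟨hy, hr⟩ := hr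
  rcases h with ⟨-, h2, h3, h4⟩ | ⟨h1, -⟩
  · rcases hr with ⟨hx, hz⟩ | ⟨hx, hz, hr⟩
    · have := h3 hx; omega
    · have := h4 hx; omega
  · exact h1 ⟨hy, by omega⟩

theorem Runner.step {I : ℤ → ℤ → Prop} {D H i j s x y z : ℤ}
    (hH : 4 ≤ H) (hs : 1 ≤ s) (hI : I i j) (hj : 0 ≤ 2 * j ∧ 2 * j ≤ D)
    (hW : Crossbar I D H x y z) (hr : Runner H i j s x y z) :
    ∃ x' y' z', Crossbar I D H x' y' z' ∧ Near x y z x' y' z' ∧ Runner H i j (s - 1) x' y' z' := by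
  obtain ⟨⟨hx0, hx1⟩, ⟨hy0, hy1⟩, ⟨hz0, hz1⟩, -⟩ := hW
  obtain ⟨rfl, ⟨rfl, rfl⟩ | ⟨hx, hz, hr⟩⟩ := hr
  · exact ⟨2 * j, 2 * i, H - 1 - s + 1,
      ⟨⟨by omega, by omega⟩, ⟨by omega, by omega⟩, ⟨by omega, by omega⟩,
        Or.inr (Or.inr ⟨i, j, rfl, rfl, hI⟩)⟩,
      ⟨by omega, by omega, by omega⟩, rfl, Or.inl ⟨rfl, by omega⟩⟩
  · by_cases h1 : x - 2 * j = 1 ∨ x - 2 * j = -1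
    · refine ⟨2 * j, 2 * i, 1,
        ⟨⟨by omega, by omega⟩, ⟨by omega, by omega⟩, ⟨by omega, by omega⟩,
          Or.inr (Or.inr ⟨i, j, rfl, rfl, hI⟩)⟩,
        ⟨by omega, by omega, by omega⟩, rfl, Or.inl ⟨rfl, by grind⟩⟩
    · rcases lt_or_gt_of_ne hx with h2 | h2
      · refine ⟨x + 1, 2 * i, 0,
          ⟨⟨by omega, by omega⟩, ⟨by omega, by omega⟩, ⟨by omega, by omega⟩,
            Or.inl ⟨rfl, by omega⟩⟩,
          ⟨by omega, by omega, by omega⟩, rfl, Or.inr ⟨by omega, by omega, by grind⟩⟩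
      · refine ⟨x - 1, 2 * i, 0,
          ⟨⟨by omega, by omega⟩, ⟨by omega, by omega⟩, ⟨by omega, by omega⟩,
            Or.inl ⟨rfl, by omega⟩⟩,
          ⟨by omega, by omega, by omega⟩, rfl, Or.inr ⟨by omega, by omega, by grind⟩⟩

/-- What the cops may look like, seen from the row of `i`, when the robber enters that row from the
shaft of `(i, v)`, at `(2 v, 2 i, 1)`: in the star of `i` a cop is at least two steps behind
the robber in the same shaft, or at least `D + 3` steps up another shaft. -/
def Clear (D H i v x y z : ℤ) : Prop :=
  y = 2 * i → z < H → 3 ≤ z ∧ (x ≠ 2 * v → D + 3 ≤ z)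

/-- Exchanging the roles of points and lines by `(x, y, z) ↦ (y, x, H - z)`, the arrival of the
robber at the end of its shaft is an entry into a row with all cops clear. -/
theorem Harmless.clear_flip {I : ℤ → ℤ → Prop} {D H i j x y z : ℤ} (hD : 0 ≤ D)
    (hW : Crossbar I D H x y z) (h : Harmless I D H i j 0 x y z) :
    Clear D H j i y x (H - z) := by
  intro hx hz
  obtain ⟨-, -, ⟨hz0, hz1⟩, hW⟩ := hW
  rcases h with ⟨h1, h2, h3, -⟩ | ⟨h1, h2, h3⟩
  · have := h3 hx
    exact ⟨by omega, fun h => absurd h1 h⟩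
  · rcases hW with h | h | ⟨a, b, ha, hb, hab⟩
    · omega
    · omega
    · obtain rfl : b = j := by omega
      have := (h3 a ha hab (by rintro rfl; omega)).1 hb
      omega

/-- A cop that is clear is harmless for the run from the entry `(2 v, 2 i, 1)` towards `j`, provided
it is not in the column or a shaft of `j` and not in the star of another point of `j`. -/
theorem Clear.harmless {I : ℤ → ℤ → Prop} {D H i v j x y z : ℤ}
    (hv : 0 ≤ 2 * v ∧ 2 * v ≤ D) (hj : 0 ≤ 2 * j ∧ 2 * j ≤ D)
    (h : Clear D H i v x y z) (hx : x ≠ 2 * j)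
    (hy : ∀ i', y = 2 * i' → i' ≠ i → ¬ I i' j) :
    Harmless I D H i j (H - 2 + |2 * v - 2 * j|) x y z := by
  by_cases hst : y = 2 * i ∧ z < H
  · obtain ⟨h1, h2⟩ := h hst.1 hst.2
    refine Or.inl ⟨hst.1, hst.2, fun h => absurd h hx, fun _ => ?_⟩
    by_cases hxv : x = 2 * v
    · subst hxv
      omega
    · have := h2 hxv
      grind
  · exact Or.inr ⟨hst, fun h => hx h.2, fun i' h1 h2 h3 => absurd h2 (hy i' h1 h3)⟩

/-- Each cop spoils at most two of the lines through `i`: the one whose index is read off its first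
coordinate and the one joining `i` to the point read off its second coordinate. So `2 k + 2` lines
through `i` leave a choice other than `v`. -/
theorem exists_harmless_line {I : ℤ → ℤ → Prop} {D H i v : ℤ} {k k' : ℕ} (hk : k' ≤ k)
    (hrange : ∀ i j, I i j → (0 ≤ 2 * i ∧ 2 * i ≤ D) ∧ (0 ≤ 2 * j ∧ 2 * j ≤ D))
    (hC4 : ∀ i i' j j', I i j → I i j' → I i' j → I i' j' → i = i' ∨ j = j')
    (J : Finset ℤ) (hJ : ∀ j ∈ J, I i j) (hJc : 2 * k + 2 ≤ J.card)
    (hv : I i v) (x y z : Fin k' → ℤ) (hc : ∀ m, Clear D H i v (x m) (y m) (z m)) :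
    ∃ j, I i j ∧ j ≠ v ∧ ∀ m, Harmless I D H i j (H - 2 + |2 * v - 2 * j|) (x m) (y m) (z m) := by
  classical
  let bad : Fin k' → Finset ℤ := fun m => J.filter (fun j => x m = 2 * j) ∪
    J.filter (fun j => ∃ i', y m = 2 * i' ∧ i' ≠ i ∧ I i' j)
  have hbad : ∀ m, (bad m).card ≤ 2 := by
    intro m
    refine (Finset.card_union_le _ _).trans (Nat.add_le_add (b := 1) (d := 1) ?_ ?_)
    · refine Finset.card_le_one.2 fun a ha b hb => ?_
      have h1 := (Finset.mem_filter.1 ha).2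
      have h2 := (Finset.mem_filter.1 hb).2
      omega
    · refine Finset.card_le_one.2 fun a ha b hb => ?_
      obtain ⟨ha, i₁, h1, h2, h3⟩ := Finset.mem_filter.1 ha
      obtain ⟨hb, i₂, h1', h2', h3'⟩ := Finset.mem_filter.1 hb
      obtain rfl : i₁ = i₂ := by omega
      exact (hC4 _ _ _ _ (hJ a ha) (hJ b hb) h3 h3').resolve_left (Ne.symm h2)
  have hlt : (insert v (Finset.univ.biUnion bad)).card < J.card := by
    have h1 := Finset.card_insert_le v (Finset.univ.biUnion bad)
    have h2 := Finset.card_biUnion_le_card_mul Finset.univ bad 2 (fun m _ => hbad m)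
    rw [Finset.card_univ, Fintype.card_fin] at h2
    omega
  obtain ⟨j, hj, hj'⟩ := Finset.exists_mem_notMem_of_card_lt_card hlt
  rw [Finset.mem_insert, not_or] at hj'
  refine ⟨j, hJ j hj, hj'.1, fun m => ?_⟩
  have hm : j ∉ bad m := fun h => hj'.2 (Finset.mem_biUnion.2 ⟨m, Finset.mem_univ m, h⟩)
  simp only [bad, Finset.mem_union, Finset.mem_filter, hj, true_and, not_or] at hm
  exact (hc m).harmless (hrange _ _ hv).2 (hrange _ _ (hJ j hj)).2 hm.1
    fun i' h1 h2 h3 => hm.2 ⟨i', h1, h2, h3⟩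

theorem Crossbar.flip {I : ℤ → ℤ → Prop} {D H x y z : ℤ} (hsymm : ∀ i j, I i j → I j i)
    (h : Crossbar I D H x y z) : Crossbar I D H y x (H - z) := by
  obtain ⟨hx, hy, hz, h⟩ := h
  refine ⟨hy, hx, ⟨by omega, by omega⟩, ?_⟩
  rcases h with h | h | ⟨i, j, h1, h2, h3⟩
  · exact Or.inr (Or.inl ⟨by omega, h.2⟩)
  · exact Or.inl ⟨by omega, h.2⟩
  · exact Or.inr (Or.inr ⟨j, i, h2, h1, hsymm _ _ h3⟩)

theorem Near.flip {H x y z x' y' z' : ℤ} (h : Near x y z x' y' z') :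
    Near y x (H - z) y' x' (H - z') := by
  unfold Near at *
  omega

/-! ### The robber's escape -/

/-- The point-line duality `(x, y, z) ↦ (y, x, H - z)` of the crossbar, or the identity. -/
def view (H : ℤ) : Bool → ℤ × ℤ × ℤ → ℤ × ℤ × ℤ
  | false, p => p
  | true, p => (p.2.1, p.1, H - p.2.2)

theorem view_view (H : ℤ) (o : Bool) (p : ℤ × ℤ × ℤ) : view H o (view H o p) = p := by
  cases o <;> simp [view]

theorem view_not (H : ℤ) (o : Bool) (p : ℤ × ℤ × ℤ) :
    view H (!o) p = ((view H o p).2.1, (view H o p).1, H - (view H o p).2.2) := by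
  cases o <;> simp [view]

/-- `Crossbar` for a triple. -/
def InCrossbar (I : ℤ → ℤ → Prop) (D H : ℤ) (p : ℤ × ℤ × ℤ) : Prop :=
  Crossbar I D H p.1 p.2.1 p.2.2

/-- `Near` for triples. -/
def NearP (p p' : ℤ × ℤ × ℤ) : Prop := Near p.1 p.2.1 p.2.2 p'.1 p'.2.1 p'.2.2

theorem InCrossbar.view {I : ℤ → ℤ → Prop} {D H : ℤ} (hsymm : ∀ i j, I i j → I j i) (o : Bool)
    {p : ℤ × ℤ × ℤ} (h : InCrossbar I D H p) : InCrossbar I D H (view H o p) := by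
  cases o
  · exact h
  · exact Crossbar.flip hsymm h

theorem NearP.view {H : ℤ} (o : Bool) {p p' : ℤ × ℤ × ℤ} (h : NearP p p') :
    NearP (view H o p) (view H o p') := by
  cases o
  · exact h
  · exact Near.flip h

/-- The invariant of the robber's strategy: in one of the two dual views, the robber runs towards
the end of some shaft and all cops are harmless for this run. -/
def Safe (I : ℤ → ℤ → Prop) (D H : ℤ) {k : ℕ} (c : Fin k → ℤ × ℤ × ℤ) (r : ℤ × ℤ × ℤ) : Prop :=
  ∃ (o : Bool) (i j s : ℤ), 1 ≤ s ∧ s ≤ H - 2 + D ∧ I i j ∧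
    (∀ m, Harmless I D H i j s (view H o (c m)).1 (view H o (c m)).2.1 (view H o (c m)).2.2) ∧
    Runner H i j s (view H o r).1 (view H o r).2.1 (view H o r).2.2

/-- When the robber enters a row with all cops clear, some next shaft restores the invariant. -/
theorem safe_of_clear {I : ℤ → ℤ → Prop} {D H : ℤ} {k k' : ℕ} (hk : k' ≤ k)
    (hH : H = 2 * D + 5)
    (hrange : ∀ i j, I i j → (0 ≤ 2 * i ∧ 2 * i ≤ D) ∧ (0 ≤ 2 * j ∧ 2 * j ≤ D))
    (hC4 : ∀ i i' j j', I i j → I i j' → I i' j → I i' j' → i = i' ∨ j = j')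
    (hdeg : ∀ i v, I i v → ∃ J : Finset ℤ, (∀ j ∈ J, I i j) ∧ 2 * k + 2 ≤ J.card)
    (o : Bool) {i v : ℤ} (hv : I i v) (c : Fin k' → ℤ × ℤ × ℤ) (r : ℤ × ℤ × ℤ)
    (hr : view H o r = (2 * v, 2 * i, 1))
    (hc : ∀ m, Clear D H i v (view H o (c m)).1 (view H o (c m)).2.1 (view H o (c m)).2.2) :
    Safe I D H c r := by
  obtain ⟨J, hJ, hJc⟩ := hdeg i v hv
  obtain ⟨j, hij, hjv, hh⟩ := exists_harmless_line hk hrange hC4 J hJ hJc hv _ _ _ hc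
  have h1 := (hrange _ _ hv).2
  have h2 := (hrange _ _ hij).2
  have h3 := abs_nonneg (2 * v - 2 * j)
  refine ⟨o, i, j, _, by omega, ?_, hij, hh, ?_⟩
  · grind
  · rw [hr]
    exact ⟨rfl, Or.inr ⟨by dsimp only; omega, le_rfl, rfl⟩⟩

theorem Safe.step {I : ℤ → ℤ → Prop} {D H : ℤ} {k k' : ℕ} (hk : k' ≤ k)
    (hD : 0 ≤ D) (hH : H = 2 * D + 5) (hsymm : ∀ i j, I i j → I j i)
    (hrange : ∀ i j, I i j → (0 ≤ 2 * i ∧ 2 * i ≤ D) ∧ (0 ≤ 2 * j ∧ 2 * j ≤ D))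
    (hC4 : ∀ i i' j j', I i j → I i j' → I i' j → I i' j' → i = i' ∨ j = j')
    (hdeg : ∀ i v, I i v → ∃ J : Finset ℤ, (∀ j ∈ J, I i j) ∧ 2 * k + 2 ≤ J.card)
    {c c' : Fin k' → ℤ × ℤ × ℤ} {r : ℤ × ℤ × ℤ}
    (hc : ∀ m, InCrossbar I D H (c m)) (hc' : ∀ m, InCrossbar I D H (c' m))
    (hr : InCrossbar I D H r) (hcc' : ∀ m, NearP (c m) (c' m)) (h : Safe I D H c r) :
    (∀ m, c' m ≠ r) ∧ ∃ r', InCrossbar I D H r' ∧ NearP r r' ∧ Safe I D H c' r' := by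
  obtain ⟨o, i, j, s, hs, hs', hij, hcops, hrun⟩ := h
  have hcops' : ∀ m, Harmless I D H i j (s - 1)
      (view H o (c' m)).1 (view H o (c' m)).2.1 (view H o (c' m)).2.2 := fun m =>
    (hcops m).step hD hH hs hs' ((hc m).view hsymm o) ((hc' m).view hsymm o) ((hcc' m).view o)
  refine ⟨fun m hm => ?_, ?_⟩
  · have := hcops' m
    rw [hm] at this
    exact this.ne_runner (by omega) (by omega) hrun (by omega)
  · obtain ⟨x', y', z', hW', hN', hr'⟩ :=
      hrun.step (by omega) hs hij (hrange _ _ hij).2 (hr.view hsymm o)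
    have hW'' : InCrossbar I D H (x', y', z') := hW'
    refine ⟨view H o (x', y', z'), hW''.view hsymm o, ?_, ?_⟩
    · have h1 : NearP (view H o r) (x', y', z') := hN'
      have h2 := h1.view (H := H) o
      rwa [view_view] at h2
    · rcases hs.eq_or_lt with rfl | hs1
      · -- The robber has reached the end of the shaft: dualize and choose the next one.
        rw [sub_self] at hr' hcops'
        refine safe_of_clear hk hH hrange hC4 hdeg (!o) (hsymm _ _ hij) c' _ ?_ fun m => ?_
        · rw [view_not, view_view]
          obtain ⟨h1, ⟨h2, h3⟩ | ⟨h2, h3, h4⟩⟩ := hr'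
          · simp only [Prod.mk.injEq]
            omega
          · have := abs_nonneg (x' - 2 * j)
            omega
        · rw [view_not]
          exact (hcops' m).clear_flip hD ((hc' m).view hsymm o)
      · refine ⟨o, i, j, s - 1, by omega, by omega, hij, hcops', ?_⟩
        rw [view_view]
        exact hr'

theorem Safe.ne {I : ℤ → ℤ → Prop} {D H : ℤ} {k : ℕ} (hH : 4 ≤ H)
    {c : Fin k → ℤ × ℤ × ℤ} {r : ℤ × ℤ × ℤ} (h : Safe I D H c r) (m : Fin k) : c m ≠ r := by
  obtain ⟨o, i, j, s, hs, -, -, hcops, hrun⟩ := h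
  intro hm
  have := hcops m
  rw [hm] at this
  exact this.ne_runner (by omega) (by omega) hrun hH

/-! ### Connectedness -/

/-- A set of triples that contains a base point and is closed under steps inside the crossbar is
everything, if every point lies on a line and every line is linked to the point `i₀` through
incidences. -/
theorem crossbar_connected {I : ℤ → ℤ → Prop} {D H : ℤ} (hH : 0 < H)
    (hrange : ∀ i j, I i j → (0 ≤ 2 * i ∧ 2 * i ≤ D) ∧ (0 ≤ 2 * j ∧ 2 * j ≤ D))
    (hline : ∀ i, 0 ≤ 2 * i → 2 * i ≤ D → ∃ j, I i j)
    (i₀ : ℤ) (hi₀ : 0 ≤ 2 * i₀ ∧ 2 * i₀ ≤ D)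
    (hlink : ∀ (A B : ℤ → Prop), A i₀ → (∀ i j, I i j → (A i ↔ B j)) →
      ∀ j, 0 ≤ 2 * j → 2 * j ≤ D → B j)
    (Q : ℤ × ℤ × ℤ → Prop) (hQ₀ : Q (0, 2 * i₀, 0))
    (hQ : ∀ p p', InCrossbar I D H p' → NearP p p' → Q p → Q p') :
    ∀ p, InCrossbar I D H p → Q p := by
  have seg : ∀ (f : ℤ → ℤ × ℤ × ℤ) (b : ℤ), (∀ t, 0 ≤ t → t ≤ b → InCrossbar I D H (f t)) →
      (∀ t t', t - t' ≤ 1 → t' - t ≤ 1 → NearP (f t) (f t')) →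
      ∀ t t', 0 ≤ t → t ≤ b → 0 ≤ t' → t' ≤ b → Q (f t) → Q (f t') := by
    intro f b hf hn
    have key : ∀ (n : ℕ) (t t' : ℤ), (t - t').natAbs = n → 0 ≤ t → t ≤ b → 0 ≤ t' → t' ≤ b →
        Q (f t) → Q (f t') := by
      intro n
      induction n with
      | zero =>
        intro t t' h _ _ _ _ hq
        obtain rfl : t = t' := by omega
        exact hq
      | succ n ih =>
        intro t t' h h1 h2 h3 h4 hq
        rcases lt_or_ge t t' with hlt | hge
        · exact ih (t + 1) t' (by omega) (by omega) (by omega) h3 h4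
            (hQ _ _ (hf _ (by omega) (by omega)) (hn t (t + 1) (by omega) (by omega)) hq)
        · exact ih (t - 1) t' (by omega) (by omega) (by omega) h3 h4
            (hQ _ _ (hf _ (by omega) (by omega)) (hn t (t - 1) (by omega) (by omega)) hq)
    exact fun t t' => key _ t t' rfl
  have row : ∀ i x x', 0 ≤ 2 * i → 2 * i ≤ D → 0 ≤ x → x ≤ D → 0 ≤ x' → x' ≤ D →
      Q (x, 2 * i, 0) → Q (x', 2 * i, 0) := fun i x x' h1 h2 =>
    seg (fun t => (t, 2 * i, 0)) D
      (fun t _ _ => ⟨⟨by assumption, by assumption⟩, ⟨h1, h2⟩, ⟨le_rfl, hH.le⟩,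
        Or.inl ⟨rfl, by dsimp only; omega⟩⟩)
      (fun t t' _ _ => ⟨⟨by assumption, by assumption⟩, by dsimp only; omega,
        by dsimp only; omega⟩) x x'
  have col : ∀ j y y', 0 ≤ 2 * j → 2 * j ≤ D → 0 ≤ y → y ≤ D → 0 ≤ y' → y' ≤ D →
      Q (2 * j, y, H) → Q (2 * j, y', H) := fun j y y' h1 h2 =>
    seg (fun t => (2 * j, t, H)) D
      (fun t _ _ => ⟨⟨h1, h2⟩, ⟨by assumption, by assumption⟩, ⟨hH.le, le_rfl⟩,
        Or.inr (Or.inl ⟨rfl, by dsimp only; omega⟩)⟩)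
      (fun t t' _ _ => ⟨by dsimp only; omega, ⟨by assumption, by assumption⟩,
        by dsimp only; omega⟩) y y'
  have shaft : ∀ i j z z', I i j → 0 ≤ z → z ≤ H → 0 ≤ z' → z' ≤ H →
      Q (2 * j, 2 * i, z) → Q (2 * j, 2 * i, z') := fun i j z z' hI =>
    seg (fun t => (2 * j, 2 * i, t)) H
      (fun t _ _ => ⟨(hrange _ _ hI).2, (hrange _ _ hI).1, ⟨by assumption, by assumption⟩,
        Or.inr (Or.inr ⟨i, j, rfl, rfl, hI⟩)⟩)
      (fun t t' _ _ => ⟨by dsimp only; omega, by dsimp only; omega,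
        ⟨by assumption, by assumption⟩⟩) z z'
  have hiff : ∀ i j, I i j → (Q (0, 2 * i, 0) ↔ Q (2 * j, 0, H)) := by
    intro i j hI
    obtain ⟨⟨h1, h2⟩, h3, h4⟩ := hrange _ _ hI
    constructor
    · intro h
      exact col j _ _ h3 h4 h1 h2 le_rfl (by omega) (shaft i j 0 H hI le_rfl hH.le hH.le le_rfl
        (row i _ _ h1 h2 le_rfl (by omega) h3 h4 h))
    · intro h
      exact row i _ _ h1 h2 h3 h4 le_rfl (by omega) (shaft i j H 0 hI hH.le le_rfl le_rfl hH.le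
        (col j _ _ h3 h4 le_rfl (by omega) h1 h2 h))
  have hB := hlink (fun i => Q (0, 2 * i, 0)) (fun j => Q (2 * j, 0, H)) hQ₀ hiff
  have hA : ∀ i, 0 ≤ 2 * i → 2 * i ≤ D → Q (0, 2 * i, 0) := by
    intro i h1 h2
    obtain ⟨j, hj⟩ := hline i h1 h2
    exact (hiff i j hj).2 (hB j (hrange _ _ hj).2.1 (hrange _ _ hj).2.2)
  rintro ⟨x, y, z⟩ ⟨⟨hx0, hx1⟩, ⟨hy0, hy1⟩, ⟨hz0, hz1⟩, h⟩
  dsimp only at *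
  rcases h with ⟨rfl, h⟩ | ⟨rfl, h⟩ | ⟨i, j, rfl, rfl, hI⟩
  · obtain ⟨i, rfl⟩ : ∃ i, y = 2 * i := ⟨y / 2, by omega⟩
    exact row i _ _ hy0 hy1 le_rfl (by omega) hx0 hx1 (hA i hy0 hy1)
  · obtain ⟨j, rfl⟩ : ∃ j, x = 2 * j := ⟨x / 2, by omega⟩
    exact col j _ _ hx0 hx1 le_rfl (by omega) hy0 hy1 (hB j hx0 hx1)
  · exact shaft i j 0 z hI le_rfl hH.le hz0 hz1
      (row i _ _ hy0 hy1 le_rfl (by omega) hx0 hx1 (hA i hy0 hy1))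

/-! ### The incidence relation -/

/-- The numbering of the points (and also of the lines) of the plane over `ZMod q`. -/
noncomputable def idx (q : ℕ) [NeZero q] (P : ZMod q × ZMod q) : ℤ :=
  ((Fintype.equivFin (ZMod q × ZMod q) P : ℕ) : ℤ)

/-- Incidence of the point `P` with the non-vertical line `P.2 + L.2 = P.1 * L.1`, a form of the
line equation that is symmetric in `P` and `L`, transported to the indices. -/
def Inc (q : ℕ) [NeZero q] (i j : ℤ) : Prop :=
  ∃ P L : ZMod q × ZMod q, i = idx q P ∧ j = idx q L ∧ P.2 + L.2 = P.1 * L.1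

theorem idx_injective (q : ℕ) [NeZero q] : Function.Injective (idx q) := by
  intro P L h
  have h' : (Fintype.equivFin (ZMod q × ZMod q) P : ℕ) = Fintype.equivFin (ZMod q × ZMod q) L := by
    exact Int.ofNat_inj.1 h
  exact (Fintype.equivFin _).injective (Fin.ext h')

theorem idx_range (q : ℕ) [NeZero q] (P : ZMod q × ZMod q) :
    0 ≤ 2 * idx q P ∧ 2 * idx q P ≤ 2 * (q * q : ℤ) - 2 := by
  have h : (Fintype.equivFin (ZMod q × ZMod q) P : ℕ) < q * q := by
    refine (Fintype.equivFin (ZMod q × ZMod q) P).2.trans_eq ?_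
    rw [Fintype.card_prod, ZMod.card]
  have h' : idx q P < q * q := by unfold idx; exact_mod_cast h
  have h0 : 0 ≤ idx q P := Int.natCast_nonneg _
  omega

theorem exists_idx (q : ℕ) [NeZero q] (i : ℤ) (h0 : 0 ≤ 2 * i)
    (h1 : 2 * i ≤ 2 * (q * q : ℤ) - 2) : ∃ P, i = idx q P := by
  have hlt : i.toNat < Fintype.card (ZMod q × ZMod q) := by
    rw [Fintype.card_prod, ZMod.card]
    zify
    rw [Int.toNat_of_nonneg (by omega)]
    omega
  refine ⟨(Fintype.equivFin (ZMod q × ZMod q)).symm ⟨i.toNat, hlt⟩, ?_⟩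
  rw [idx, Equiv.apply_symm_apply]
  exact (Int.toNat_of_nonneg (by omega)).symm

theorem Inc.symm {q : ℕ} [NeZero q] (i j : ℤ) (h : Inc q i j) : Inc q j i := by
  obtain ⟨P, L, h1, h2, h3⟩ := h
  exact ⟨L, P, h2, h1, by rw [add_comm, h3, mul_comm]⟩

theorem Inc.range {q : ℕ} [NeZero q] (i j : ℤ) (h : Inc q i j) :
    (0 ≤ 2 * i ∧ 2 * i ≤ 2 * (q * q : ℤ) - 2) ∧ (0 ≤ 2 * j ∧ 2 * j ≤ 2 * (q * q : ℤ) - 2) := by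
  obtain ⟨P, L, rfl, rfl, -⟩ := h
  exact ⟨idx_range q P, idx_range q L⟩

theorem inc_idx {q : ℕ} [NeZero q] {P L : ZMod q × ZMod q} :
    Inc q (idx q P) (idx q L) ↔ P.2 + L.2 = P.1 * L.1 := by
  constructor
  · rintro ⟨P', L', h1, h2, h3⟩
    rw [idx_injective q h1, idx_injective q h2, h3]
  · exact fun h => ⟨P, L, rfl, rfl, h⟩

/-- Two distinct points lie on at most one common line. -/
theorem Inc.c4_free {q : ℕ} [Fact q.Prime] (i i' j j' : ℤ) (h1 : Inc q i j) (h2 : Inc q i j')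
    (h3 : Inc q i' j) (h4 : Inc q i' j') : i = i' ∨ j = j' := by
  obtain ⟨P, L, rfl, rfl, e1⟩ := h1
  obtain ⟨P', L', rfl, rfl, e4⟩ := h4
  rw [inc_idx] at h2 h3
  have h : (P.1 - P'.1) * (L.1 - L'.1) = 0 := by linear_combination h2 + h3 - e1 - e4
  rcases mul_eq_zero.1 h with h | h
  · left
    have ha : P.1 = P'.1 := sub_eq_zero.1 h
    exact congrArg _ (Prod.ext ha (by linear_combination e1 - h3 + L.1 * ha))
  · right
    have ha : L.1 = L'.1 := sub_eq_zero.1 h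
    exact congrArg _ (Prod.ext ha (by linear_combination e1 - h2 + P.1 * ha))

theorem Inc.degree {q : ℕ} [NeZero q] {k : ℕ} (hq : 2 * k + 2 ≤ q) (i v : ℤ) (h : Inc q i v) :
    ∃ J : Finset ℤ, (∀ j ∈ J, Inc q i j) ∧ 2 * k + 2 ≤ J.card := by
  classical
  obtain ⟨P, L, rfl, -, -⟩ := h
  refine ⟨Finset.univ.image fun m : ZMod q => idx q (m, P.1 * m - P.2), ?_, ?_⟩
  · intro j hj
    obtain ⟨m, -, rfl⟩ := Finset.mem_image.1 hj
    exact inc_idx.2 (by ring)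
  · rw [Finset.card_image_of_injective _
      fun a b hab => (Prod.ext_iff.1 (idx_injective q hab)).1, Finset.card_univ, ZMod.card]
    exact hq

theorem Inc.exists_line {q : ℕ} [NeZero q] (P : ZMod q × ZMod q) :
    Inc q (idx q P) (idx q (0, -P.2)) := inc_idx.2 (by simp)

/-- Every line is linked to the point `(0, 0)`: the line `(m, n)` contains `(1, m - n)`, which is
on the line `(m - n, 0)` through `(0, 0)`. -/
theorem Inc.link {q : ℕ} [NeZero q] (A B : ℤ → Prop) (h0 : A (idx q (0, 0)))
    (hAB : ∀ i j, Inc q i j → (A i ↔ B j)) (L : ZMod q × ZMod q) : B (idx q L) := by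
  have h1 : Inc q (idx q (0, 0)) (idx q (L.1 - L.2, 0)) := inc_idx.2 (by simp)
  have h2 : Inc q (idx q (1, L.1 - L.2)) (idx q (L.1 - L.2, 0)) := inc_idx.2 (by simp)
  have h3 : Inc q (idx q (1, L.1 - L.2)) (idx q L) := inc_idx.2 (by simp)
  exact (hAB _ _ h3).1 ((hAB _ _ h2).2 ((hAB _ _ h1).1 h0))

/-- Any family of fewer than `q * q` numbers misses `2 * i` for the index `i` of some point. -/
theorem exists_free_point {q : ℕ} [NeZero q] {k : ℕ} (hk : k < q * q) (y : Fin k → ℤ) :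
    ∃ P : ZMod q × ZMod q, ∀ m, y m ≠ 2 * idx q P := by
  by_contra! h
  choose f hf using h
  have hinj : Function.Injective f := by
    intro P L hPL
    apply idx_injective q
    have h1 := hf P
    have h2 := hf L
    rw [hPL] at h1
    omega
  have := Fintype.card_le_of_injective f hinj
  rw [Fintype.card_prod, ZMod.card, Fintype.card_fin] at this
  omega

/-! ### Unit cubes -/

theorem finite_inCrossbar (I : ℤ → ℤ → Prop) (D H : ℤ) : {p | InCrossbar I D H p}.Finite := by
  refine (Set.finite_Icc ((0, 0, 0) : ℤ × ℤ × ℤ) (D, D, H)).subset ?_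
  rintro ⟨x, y, z⟩ ⟨h1, h2, h3, -⟩
  exact ⟨⟨h1.1, h2.1, h3.1⟩, ⟨h1.2, h2.2, h3.2⟩⟩

/-- The unit cube with lowest corner `p`. -/
def cubeAt (p : ℤ × ℤ × ℤ) : Set (EuclideanSpace ℝ (Fin 3)) :=
  {q | ∀ i, (!₂[(p.1 : ℝ), (p.2.1 : ℝ), (p.2.2 : ℝ)] : EuclideanSpace ℝ (Fin 3)) i ≤ q i ∧
    q i ≤ (!₂[(p.1 : ℝ), (p.2.1 : ℝ), (p.2.2 : ℝ)] : EuclideanSpace ℝ (Fin 3)) i + 1}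

theorem cubeAt_inter_nonempty (p p' : ℤ × ℤ × ℤ) :
    (cubeAt p ∩ cubeAt p').Nonempty ↔ NearP p p' := by
  have aux : ∀ a b : ℤ, ∀ t : ℝ, (a : ℝ) ≤ t → t ≤ b + 1 → a - b ≤ 1 := by
    intro a b t h1 h2
    have : (a : ℝ) ≤ b + 1 := h1.trans h2
    have : a ≤ b + 1 := by exact_mod_cast this
    omega
  constructor
  · rintro ⟨t, h, h'⟩
    have h0 := h 0; have h1 := h 1; have h2 := h 2
    have h0' := h' 0; have h1' := h' 1; have h2' := h' 2
    simp at h0 h1 h2 h0' h1' h2'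
    exact ⟨⟨aux _ _ _ h0.1 h0'.2, aux _ _ _ h0'.1 h0.2⟩,
      ⟨aux _ _ _ h1.1 h1'.2, aux _ _ _ h1'.1 h1.2⟩, aux _ _ _ h2.1 h2'.2, aux _ _ _ h2'.1 h2.2⟩
  · rintro ⟨⟨h1, h2⟩, ⟨h3, h4⟩, h5, h6⟩
    have mx : ∀ a b : ℤ, a - b ≤ 1 → b - a ≤ 1 →
        ((a : ℝ) ≤ (max a b : ℤ) ∧ ((max a b : ℤ) : ℝ) ≤ a + 1) ∧
        ((b : ℝ) ≤ (max a b : ℤ) ∧ ((max a b : ℤ) : ℝ) ≤ b + 1) := by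
      intro a b h h'
      refine ⟨⟨?_, ?_⟩, ?_, ?_⟩ <;> norm_cast <;> omega
    -- The coordinatewise maximum of the two lowest corners lies in both cubes.
    refine ⟨!₂[((max p.1 p'.1 : ℤ) : ℝ), ((max p.2.1 p'.2.1 : ℤ) : ℝ),
      ((max p.2.2 p'.2.2 : ℤ) : ℝ)], fun i => ?_, fun i => ?_⟩
    · fin_cases i
      · exact (mx _ _ h1 h2).1
      · exact (mx _ _ h3 h4).1
      · exact (mx _ _ h5 h6).1
    · fin_cases i
      · exact (mx _ _ h1 h2).2
      · exact (mx _ _ h3 h4).2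
      · exact (mx _ _ h5 h6).2

/-- For every `k` there is a finite connected graph with cop number greater than `k`
which is an intersection graph of axis-aligned unit cubes in `ℝ³`; hence the maximum
cop number of intersection graphs of 3-dimensional unit cubes is unbounded. -/
theorem copNumber_unbounded_unit_cubes (k : ℕ) :
    ∃ (n : ℕ) (G : SimpleGraph (Fin n)), G.Connected ∧ k < copNumber G ∧
      ∃ S : Fin n → Set (EuclideanSpace ℝ (Fin 3)),
        (∀ v, IsUnitCube (S v)) ∧
        ∀ u v, G.Adj u v ↔ u ≠ v ∧ (S u ∩ S v).Nonempty := by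
  obtain ⟨q, hq, hqp⟩ := Nat.exists_infinite_primes (2 * k + 2)
  have : Fact q.Prime := ⟨hqp⟩
  have hqq : k < q * q := by nlinarith
  obtain ⟨D, hDdef⟩ : ∃ D : ℤ, D = 2 * (q * q : ℤ) - 2 := ⟨_, rfl⟩
  obtain ⟨H, hH⟩ : ∃ H : ℤ, H = 2 * D + 5 := ⟨_, rfl⟩
  have hD : 0 ≤ D := by
    have : (1 : ℤ) ≤ q * q := by exact_mod_cast (by omega : 1 ≤ q * q)
    omega
  have hrange : ∀ i j, Inc q i j → (0 ≤ 2 * i ∧ 2 * i ≤ D) ∧ (0 ≤ 2 * j ∧ 2 * j ≤ D) := by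
    rw [hDdef]; exact Inc.range
  let W := {p | InCrossbar (Inc q) D H p}
  have : Fintype W := (finite_inCrossbar (Inc q) D H).fintype
  let e := Fintype.equivFin W
  let pos : Fin (Fintype.card W) → ℤ × ℤ × ℤ := fun v => (e.symm v).1
  have hpos : ∀ v, InCrossbar (Inc q) D H (pos v) := fun v => (e.symm v).2
  have hposinj : Function.Injective pos := Subtype.val_injective.comp e.symm.injective
  have hsurj : ∀ p, InCrossbar (Inc q) D H p → ∃ v, pos v = p := fun p hp =>
    ⟨e ⟨p, hp⟩, by simp only [pos, Equiv.symm_apply_apply]⟩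
  let G : SimpleGraph (Fin (Fintype.card W)) :=
    { Adj := fun u v => u ≠ v ∧ NearP (pos u) (pos v)
      symm := ⟨fun u v h => ⟨h.1.symm, by have := h.2; unfold NearP Near at *; omega⟩⟩
      loopless := ⟨fun u h => h.1 rfl⟩ }
  have hmove : ∀ u v, NearP (pos u) (pos v) → v = u ∨ G.Adj u v := fun u v h =>
    (eq_or_ne v u).imp id fun hne => ⟨hne.symm, h⟩
  have hmove' : ∀ u v, (v = u ∨ G.Adj u v) → NearP (pos u) (pos v) := by
    rintro u v (rfl | h)
    · unfold NearP Near; omega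
    · exact h.2
  refine ⟨_, G, ?_, ?_, fun v => cubeAt (pos v), fun v => ⟨_, rfl⟩, fun u v => ?_⟩
  · have h0 := idx_range q (0, 0)
    rw [← hDdef] at h0
    obtain ⟨b, hb⟩ := hsurj (0, 2 * idx q (0, 0), 0)
      ⟨⟨le_rfl, hD⟩, h0, ⟨le_rfl, by dsimp only; omega⟩, Or.inl ⟨rfl, by dsimp only; omega⟩⟩
    have key := crossbar_connected (I := Inc q) (D := D) (H := H) (by omega) hrange
      (fun i h1 h2 => by
        obtain ⟨P, rfl⟩ := exists_idx q i h1 (hDdef ▸ h2)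
        exact ⟨_, Inc.exists_line P⟩)
      (idx q (0, 0)) h0
      (fun A B hA hAB j h1 h2 => by
        obtain ⟨L, rfl⟩ := exists_idx q j h1 (hDdef ▸ h2)
        exact Inc.link A B hA hAB L)
      (fun p => ∃ v, pos v = p ∧ G.Reachable b v) ⟨b, hb, SimpleGraph.Reachable.refl _⟩
      (by
        rintro _ p' hp' hn ⟨v, rfl, hv⟩
        obtain ⟨v', rfl⟩ := hsurj p' hp'
        refine ⟨v', rfl, ?_⟩
        rcases hmove v v' hn with rfl | h
        · exact hv
        · exact hv.trans h.reachable)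
    refine (SimpleGraph.connected_iff_exists_forall_reachable G).2 ⟨b, fun v => ?_⟩
    obtain ⟨v', hv', h⟩ := key (pos v) (hpos v)
    rwa [hposinj hv'] at h
  · have hnot : ∀ k' ≤ k, ¬ CopWin G k' := by
      intro k' hk'
      refine not_copWin_of_safe G k'
        (fun c r => Safe (Inc q) D H (fun m => pos (c m)) (pos r)) ?_ ?_ ?_
      · intro c
        obtain ⟨P, hP⟩ := exists_free_point (hk'.trans_lt hqq) (fun m => (pos (c m)).2.1)
        have hI := Inc.exists_line P
        obtain ⟨r, hr⟩ := hsurj (2 * idx q (0, -P.2), 2 * idx q P, 1)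
          ⟨(hrange _ _ hI).2, (hrange _ _ hI).1, ⟨by dsimp only; omega, by dsimp only; omega⟩,
            Or.inr (Or.inr ⟨_, _, rfl, rfl, hI⟩)⟩
        exact ⟨r, safe_of_clear hk' hH hrange Inc.c4_free (Inc.degree hq) false hI _ _ hr
          fun m h => absurd h (hP m)⟩
      · exact fun c r h m hm => h.ne (by omega) m (congrArg pos hm)
      · intro c r c' h hc
        obtain ⟨h1, r', h2, h3, h4⟩ := h.step hk' hD hH Inc.symm hrange Inc.c4_free
          (Inc.degree hq) (c' := fun m => pos (c' m)) (fun m => hpos _) (fun m => hpos _) (hpos r)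
          (fun m => hmove' _ _ (hc m))
        obtain ⟨v, rfl⟩ := hsurj r' h2
        exact ⟨fun m hm => h1 m (congrArg pos hm), v, hmove _ _ h3, h4⟩
    by_contra hlt
    exact hnot _ (not_lt.1 hlt) (Nat.sInf_mem (s := {k | CopWin G k}) ⟨_, copWin_card G⟩)
  · rw [cubeAt_inter_nonempty]
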